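/- arXiv:1812.09967 — 2 statements merged into one kernel-verified Lean document; each statement's English description precedes it below -/
import Mathlib

section
/- Let k ≥ 2 and ℓ ≥ 2 be integers, α a real number, and let S be the vertex set of the (k,ℓ)-spider. With μ_t, χ, ψ_t as in the context, the positive semidefinite matrix Ψ̃ = χχᵀ + Σ_{t=0}^{ℓ−1} ψ_tψ_tᵀ satisfies: ⟨Ψ̃, A^{(0)}⟩ = 2 + (2/k)(α² + α⁴ + ⋯ + α^{2ℓ−2}) + (1/k)α^{2ℓ}; ⟨Ψ̃, A^{(1)}⟩ = 2α; ⟨Ψ̃, A^{(2)}⟩ = −(2/k)(α² + α⁴ + ⋯ + α^{2ℓ−2}); ⟨Ψ̃, A^{(d)}⟩ = 0 for every integer d with 2 < d < 2ℓ; and ⟨Ψ̃, A^{(2ℓ)}⟩ = (1 − 1/k)·α^{2ℓ}. -/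
/-- The vertex set of the `(k,ℓ)`-spider: the root (`none`) together with `k` paths
(arms) of length `ℓ`; `some (a, t)` is the vertex at distance `t+1` from the root
on arm `a`. -/
abbrev Spider (k l : ℕ) := Option (Fin k × Fin l)

/-- The graph distance in the `(k,ℓ)`-spider tree. -/
def spiderDist {k l : ℕ} : Spider k l → Spider k l → ℕ
  | none, none => 0
  | none, some (_, t) => (t : ℕ) + 1
  | some (_, t), none => (t : ℕ) + 1
  | some (a, t), some (b, s) =>
      if a = b then Nat.dist (t : ℕ) (s : ℕ) else (t : ℕ) + (s : ℕ) + 2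

/-- The distance-`d` adjacency matrix `A^{(d)}` of the `(k,ℓ)`-spider. -/
noncomputable def spiderA (k l d : ℕ) : Matrix (Spider k l) (Spider k l) ℝ :=
  Matrix.of fun i j => if spiderDist i j = d then (1 : ℝ) else 0

/-- The Frobenius inner product `⟨B, C⟩ = Tr(Bᵀ C)`. -/
noncomputable def frob {n : Type*} [Fintype n] (B C : Matrix n n ℝ) : ℝ :=
  (B.transpose * C).trace

/-- The vector `μ_t = avg_{i ∈ V_t} {α^t e_i} = (α^t / |V_t|) ∑_{i ∈ V_t} e_i`, where
`V_t` is the set of spider vertices at distance `t` from the root (`|V_0| = 1`,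
`|V_t| = k` for `1 ≤ t ≤ ℓ`).  For `t > ℓ` there are no such vertices, so `μ_t = 0`;
in particular `μ_{ℓ+1} = 0`. -/
noncomputable def spiderMu (k l : ℕ) (α : ℝ) (t : ℕ) : Spider k l → ℝ :=
  fun i => if spiderDist (none : Spider k l) i = t
    then α ^ t / (if t = 0 then 1 else (k : ℝ)) else 0

/-!
Averaging over a uniformly random arm gives `μ_sᵀ A^{(d)} μ_t` as `α ^ (s + t)` times the
probability that random vertices at depths `s` and `t` are at distance `d`. They share an arm with
probability `1 / k`, and their distance is then `|s - t|`; otherwise it is `s + t`.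

Expanding `⟨Ψ̃, A^{(d)}⟩`, the term of `(t, t)` is paired with that of `(t - 1, t + 1)`. Both have
depth sum `2t`, so the contributions of distinct arms cancel. What survives is the contribution of a
single arm, at `d = 0` and `d = 2`, and the boundary terms at depths `0`, `1` and `ℓ`.
-/

open scoped Matrix

section Frobenius

variable {n : Type*} [Fintype n]

theorem frob_add_left (B C A : Matrix n n ℝ) : frob (B + C) A = frob B A + frob C A := by
  simp [frob, Matrix.add_mul]

theorem frob_sum_left {ι : Type*} (s : Finset ι) (B : ι → Matrix n n ℝ) (A : Matrix n n ℝ) :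
    frob (∑ t ∈ s, B t) A = ∑ t ∈ s, frob (B t) A := by
  simp [frob, Matrix.transpose_sum, Matrix.sum_mul, Matrix.trace_sum]

theorem frob_vecMulVec (u v : n → ℝ) (A : Matrix n n ℝ) :
    frob (Matrix.vecMulVec u v) A = u ⬝ᵥ A *ᵥ v := by
  rw [frob, Matrix.transpose_vecMulVec, Matrix.vecMulVec_mul, Matrix.trace_vecMulVec,
    dotProduct_comm, ← Matrix.dotProduct_mulVec]

variable {A : Matrix n n ℝ} (hA : A.IsSymm)
include hA

theorem frob_vecMulVec_add_self (u v : n → ℝ) :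
    frob (Matrix.vecMulVec (u + v) (u + v)) A
      = u ⬝ᵥ A *ᵥ u + 2 * (u ⬝ᵥ A *ᵥ v) + v ⬝ᵥ A *ᵥ v := by
  have hvu : v ⬝ᵥ A *ᵥ u = u ⬝ᵥ A *ᵥ v := by
    rw [Matrix.dotProduct_mulVec, ← Matrix.mulVec_transpose, hA.eq, dotProduct_comm]
  rw [frob_vecMulVec, Matrix.mulVec_add, add_dotProduct, dotProduct_add, dotProduct_add, hvu]
  ring

theorem frob_vecMulVec_sub_self (u v : n → ℝ) :
    frob (Matrix.vecMulVec (u - v) (u - v)) A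
      = u ⬝ᵥ A *ᵥ u - 2 * (u ⬝ᵥ A *ᵥ v) + v ⬝ᵥ A *ᵥ v := by
  rw [sub_eq_add_neg, frob_vecMulVec_add_self hA]
  simp only [Matrix.mulVec_neg, dotProduct_neg, neg_dotProduct]
  ring

end Frobenius

section PsiTilde

variable {n : Type*}

/-- The matrix `Ψ̃ = χχᵀ + ∑_{t < ℓ} ψ_t ψ_tᵀ` with `χ = μ_0 + μ_1` and `ψ_t = μ_t - μ_{t+2}`,
for an arbitrary sequence of vectors `μ`. -/
def psiTilde (μ : ℕ → n → ℝ) (l : ℕ) : Matrix n n ℝ :=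
  Matrix.vecMulVec (μ 0 + μ 1) (μ 0 + μ 1)
    + ∑ t ∈ Finset.range l, Matrix.vecMulVec (μ t - μ (t + 2)) (μ t - μ (t + 2))

theorem posSemidef_psiTilde [Finite n] (μ : ℕ → n → ℝ) (l : ℕ) : (psiTilde μ l).PosSemidef := by
  have vecMulVec_self (v : n → ℝ) : (Matrix.vecMulVec v v).PosSemidef := by
    simpa using Matrix.posSemidef_vecMulVec_self_star v
  exact (vecMulVec_self _).add (Matrix.posSemidef_sum _ fun t _ ↦ vecMulVec_self _)

theorem frob_psiTilde [Fintype n] {A : Matrix n n ℝ} (hA : A.IsSymm) {μ : ℕ → n → ℝ} {m : ℕ}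
    (hμ : μ (m + 2) = 0) :
    frob (psiTilde μ (m + 1)) A
      = 2 * (μ 0 ⬝ᵥ A *ᵥ μ 0) + 2 * (μ 0 ⬝ᵥ A *ᵥ μ 1) + μ (m + 1) ⬝ᵥ A *ᵥ μ (m + 1)
        + 2 * ∑ t ∈ Finset.range m, (μ (t + 1) ⬝ᵥ A *ᵥ μ (t + 1) - μ t ⬝ᵥ A *ᵥ μ (t + 2)) := by
  set q : ℕ → ℝ := fun t ↦ μ t ⬝ᵥ A *ᵥ μ t
  set r : ℕ → ℝ := fun t ↦ μ t ⬝ᵥ A *ᵥ μ (t + 2)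
  have hq_end : q (m + 2) = 0 := by simp [q, hμ]
  have hr_end : r m = 0 := by simp [r, hμ]
  have expand : frob (psiTilde μ (m + 1)) A = q 0 + 2 * (μ 0 ⬝ᵥ A *ᵥ μ 1) + q 1
      + ∑ t ∈ Finset.range (m + 1), (q t - 2 * r t + q (t + 2)) := by
    simp only [psiTilde, frob_add_left, frob_sum_left, frob_vecMulVec_add_self hA,
      frob_vecMulVec_sub_self hA, q, r]
  have shift_one : ∑ t ∈ Finset.range (m + 1), q t = ∑ t ∈ Finset.range m, q (t + 1) + q 0 :=
    Finset.sum_range_succ' q m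
  have shift_two : ∑ t ∈ Finset.range (m + 1), q (t + 2) + q 1
      = ∑ t ∈ Finset.range m, q (t + 1) + q (m + 1) + q (m + 2) := by
    rw [← Finset.sum_range_succ' (fun t ↦ q (t + 1)), Finset.sum_range_succ, Finset.sum_range_succ]
  rw [expand]
  simp only [Finset.sum_add_distrib, Finset.sum_sub_distrib, ← Finset.mul_sum]
  rw [Finset.sum_range_succ r]
  linear_combination shift_one + shift_two + hq_end - 2 * hr_end

end PsiTilde

theorem sum_sum_ite_eq_add {ι R : Type*} [Fintype ι] [DecidableEq ι] [CommRing R] (x y : R) :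
    ∑ i : ι, ∑ j : ι, (if i = j then x else y)
      = Fintype.card ι * (x + (Fintype.card ι - 1) * y) := by
  have split_ite (i j : ι) : (if i = j then x else y) = (if i = j then x - y else 0) + y := by
    split_ifs <;> ring
  simp only [split_ite, Finset.sum_add_distrib, Finset.sum_ite_eq, Finset.mem_univ, if_true,
    Finset.sum_const, Finset.card_univ, nsmul_eq_mul]
  ring

section Spider

variable {k l : ℕ}

theorem spiderDist_comm : ∀ i j : Spider k l, spiderDist i j = spiderDist j i
  | none, none | none, some _ | some _, none => rfl
  | some (a, t), some (b, s) => by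
    simp only [spiderDist, eq_comm (a := a), Nat.dist_comm (t : ℕ), add_comm (t : ℕ)]

theorem isSymm_spiderA (d : ℕ) : (spiderA k l d).IsSymm :=
  Matrix.IsSymm.ext fun i j ↦ by simp only [spiderA, Matrix.of_apply, spiderDist_comm]

theorem spiderMu_of_lt (α : ℝ) {t : ℕ} (ht : l < t) : spiderMu k l α t = 0 := by
  have depth_ne (i : Spider k l) : spiderDist none i ≠ t := by
    rcases i with _ | ⟨a, s⟩ <;> simp only [spiderDist] <;> omega
  funext i
  exact if_neg (depth_ne i)

/-- The vertex at depth `t` on the arm `a`. At depth `0` this is the root, whichever the arm, so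
that averages over the level `V_t` become averages over arms, uniformly in `t`. -/
def armVertex (a : Fin k) : Fin (l + 1) → Spider k l :=
  Fin.cases none fun t ↦ some (a, t)

theorem spiderDist_armVertex (a b : Fin k) (s t : Fin (l + 1)) :
    spiderDist (armVertex a s) (armVertex b t) = if a = b then Nat.dist s t else s + t := by
  cases s using Fin.cases <;> cases t using Fin.cases <;>
    simp [armVertex, spiderDist, Nat.dist_succ_succ, Nat.dist_zero_left, Nat.dist_zero_right,
      add_add_add_comm]

theorem spiderMu_dotProduct (hk : k ≠ 0) (α : ℝ) (t : Fin (l + 1)) (f : Spider k l → ℝ) :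
    spiderMu k l α t ⬝ᵥ f = α ^ (t : ℕ) / k * ∑ a, f (armVertex a t) := by
  cases t using Fin.cases with
  | zero => simp [dotProduct, Fintype.sum_option, spiderMu, spiderDist, armVertex, hk]
  | succ t =>
    simp [dotProduct, Fintype.sum_option, Fintype.sum_prod_type, spiderMu, spiderDist, armVertex,
      Fin.val_inj, Finset.mul_sum]

theorem spiderMu_dotProduct_spiderA_mulVec (hk : k ≠ 0) (α : ℝ) (d : ℕ) {s t : ℕ}
    (hs : s ≤ l) (ht : t ≤ l) :
    spiderMu k l α s ⬝ᵥ spiderA k l d *ᵥ spiderMu k l α t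
      = α ^ (s + t) * ((if Nat.dist s t = d then 1 else 0) / k
          + (1 - 1 / k) * (if s + t = d then 1 else 0)) := by
  lift s to Fin (l + 1) using Nat.lt_succ_of_le hs
  lift t to Fin (l + 1) using Nat.lt_succ_of_le ht
  have entry (a b : Fin k) : spiderA k l d (armVertex a s) (armVertex b t)
      = if a = b then (if Nat.dist s t = d then 1 else 0)
        else (if (s + t : ℕ) = d then 1 else 0) := by
    rw [spiderA, Matrix.of_apply, spiderDist_armVertex]
    split_ifs <;> rfl
  have mulVec_apply (i : Spider k l) : (spiderA k l d *ᵥ spiderMu k l α t) i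
      = α ^ (t : ℕ) / k * ∑ b, spiderA k l d i (armVertex b t) := by
    rw [Matrix.mulVec, dotProduct_comm, spiderMu_dotProduct hk]
  simp only [spiderMu_dotProduct hk, mulVec_apply, ← Finset.mul_sum, entry, sum_sum_ite_eq_add,
    Fintype.card_fin]
  field_simp
  ring

theorem spiderMu_diag_sub_offDiag (hk : k ≠ 0) (α : ℝ) (d : ℕ) {t : ℕ} (ht : t + 2 ≤ l) :
    spiderMu k l α (t + 1) ⬝ᵥ spiderA k l d *ᵥ spiderMu k l α (t + 1)
        - spiderMu k l α t ⬝ᵥ spiderA k l d *ᵥ spiderMu k l α (t + 2)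
      = ((if d = 0 then 1 else 0) - (if d = 2 then 1 else 0)) / k * α ^ (2 * (t + 1)) := by
  have dist_add_two : Nat.dist t (t + 2) = 2 := by simp [Nat.dist]
  have depth_sum : t + (t + 2) = t + 1 + (t + 1) := by ring
  rw [spiderMu_dotProduct_spiderA_mulVec hk α d (by omega) (by omega),
    spiderMu_dotProduct_spiderA_mulVec hk α d (by omega) ht, Nat.dist_self, dist_add_two, depth_sum]
  simp only [eq_comm (b := d)]
  ring

theorem frob_psiTilde_spiderMu_spiderA (hk : k ≠ 0) (hl : l ≠ 0) (α : ℝ) (d : ℕ) :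
    frob (psiTilde (spiderMu k l α) l) (spiderA k l d)
      = 2 * (if d = 0 then 1 else 0) + 2 * α * (if d = 1 then 1 else 0)
        + α ^ (2 * l) * ((if d = 0 then 1 else 0) / k + (1 - 1 / k) * (if d = 2 * l then 1 else 0))
        + 2 / k * ((if d = 0 then 1 else 0) - (if d = 2 then 1 else 0))
          * ∑ t ∈ Finset.Ico 1 l, α ^ (2 * t) := by
  obtain ⟨m, rfl⟩ := Nat.exists_eq_add_one_of_ne_zero hl
  have interior : ∑ t ∈ Finset.range m,
      (spiderMu k (m + 1) α (t + 1) ⬝ᵥ spiderA k (m + 1) d *ᵥ spiderMu k (m + 1) α (t + 1)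
        - spiderMu k (m + 1) α t ⬝ᵥ spiderA k (m + 1) d *ᵥ spiderMu k (m + 1) α (t + 2))
      = ((if d = 0 then 1 else 0) - (if d = 2 then 1 else 0)) / k
        * ∑ t ∈ Finset.Ico 1 (m + 1), α ^ (2 * t) := by
    rw [Finset.range_eq_Ico, ← Finset.sum_Ico_add' (fun t ↦ α ^ (2 * t)) 0 m 1, Finset.mul_sum]
    refine Finset.sum_congr rfl fun t ht ↦ spiderMu_diag_sub_offDiag hk α d ?_
    have := (Finset.mem_Ico.mp ht).2
    omega
  rw [frob_psiTilde (isSymm_spiderA d) (spiderMu_of_lt α (Nat.lt_succ_self _)), interior,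
    spiderMu_dotProduct_spiderA_mulVec hk α d (Nat.zero_le _) (Nat.zero_le _),
    spiderMu_dotProduct_spiderA_mulVec hk α d (Nat.zero_le _) (by omega),
    spiderMu_dotProduct_spiderA_mulVec hk α d le_rfl le_rfl]
  simp only [Nat.dist_self, Nat.dist_zero_left, zero_add, ← two_mul, mul_zero, eq_comm (b := d)]
  ring

end Spider

theorem spider_psi_tilde (k l : ℕ) (hk : 2 ≤ k) (hl : 2 ≤ l) (α : ℝ) :
    letI χ : Spider k l → ℝ := spiderMu k l α 0 + spiderMu k l α 1
    letI ψ : ℕ → Spider k l → ℝ := fun t => spiderMu k l α t - spiderMu k l α (t + 2)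
    letI Ψ : Matrix (Spider k l) (Spider k l) ℝ :=
      Matrix.vecMulVec χ χ + ∑ t ∈ Finset.range l, Matrix.vecMulVec (ψ t) (ψ t)
    Ψ.PosSemidef ∧
    frob Ψ (spiderA k l 0)
      = 2 + (2 / (k : ℝ)) * (∑ t ∈ Finset.Ico 1 l, α ^ (2 * t))
          + (1 / (k : ℝ)) * α ^ (2 * l) ∧
    frob Ψ (spiderA k l 1) = 2 * α ∧
    frob Ψ (spiderA k l 2) = -(2 / (k : ℝ)) * (∑ t ∈ Finset.Ico 1 l, α ^ (2 * t)) ∧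
    (∀ d : ℕ, 2 < d → d < 2 * l → frob Ψ (spiderA k l d) = 0) ∧
    frob Ψ (spiderA k l (2 * l)) = (1 - 1 / (k : ℝ)) * α ^ (2 * l) := by
  have formula := frob_psiTilde_spiderMu_spiderA (k := k) (l := l) (by omega) (by omega) α
  have h0 : 0 ≠ 2 * l := by omega
  have h1 : 1 ≠ 2 * l := by omega
  have h2 : 2 ≠ 2 * l := by omega
  refine ⟨posSemidef_psiTilde _ _, (formula 0).trans ?_, (formula 1).trans ?_,
    (formula 2).trans ?_, fun d hd hdl ↦ (formula d).trans ?_, (formula (2 * l)).trans ?_⟩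
  · simp only [h0, if_true, if_false, zero_ne_one, two_ne_zero.symm]
    ring
  · simp only [h1, if_true, if_false, one_ne_zero, OfNat.one_ne_ofNat]
    ring
  · simp only [h2, if_true, if_false, two_ne_zero, OfNat.ofNat_ne_one]
    ring
  · simp only [hdl.ne, hd.ne', (show d ≠ 0 by omega), (show d ≠ 1 by omega), if_false]
    ring
  · simp only [h0.symm, h1.symm, h2.symm, if_true, if_false]
    ring
end

section
/- Let ℓ ≥ 1 and k ≥ 3^ℓ be integers and set R = kℓ + 1. Let ρ ≥ 0 be a real number such that the ℓ²→ℓ² operator norm of K̄^{2ℓ} is at most ρ^{2ℓ} (when K̄ is symmetric, e.g. for regular graphs, one may take ρ to be the spectral radius of K̄). Define β = (k·π_*^{−1/2}/(2·k^{1/(2ℓ)}))·ρ^{2ℓ} + 2/k^{1/(2ℓ)}. Then both of the symmetric matrices β·Π − (1/m)(Ξ∘A) and β·Π + (1/m)(Ξ∘A) are R-local sums of PSD matrices. (Since (1/m)(Ξ∘A) = ΠK̄, this expresses that R-local degree-2 sum of squares can deduce −β⟨X,X⟩_π ≤ ⟨X, K̄X⟩_π ≤ β⟨X,X⟩_π.)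 -/
/-!
Write `B = K̄`, which is self-adjoint for `⟨·, ·⟩_π`, and measure operators by their largest row
`ℓ¹` norm, so that `‖B‖ ≤ 1`. Two mechanisms produce local certificates, both for the form of an
operator `Q` that is self-adjoint for `⟨·, ·⟩_π`.

* Diagonal dominance: `‖Q‖ ≤ c` implies `Q ≤ c`, and this is a sum of `2`-local squares.
* Maurey's empirical method: `⟨x, Q² x⟩_π` is the `π`-average over `u` of the squares of the linear
  forms `∑ v, Q u v * x v`. Replacing each of them by the average of `k` random signed vertices
  costs a variance of at most `c² / (k - 1)` if `‖Q‖ ≤ c`, hence `Q² + c² / (k - 1)` is a sum of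
  `k`-local squares.

Put `s = k ^ (1 / (2l))` and `Y = sB`. Bernoulli's inequality `l (Y² - 1) ≤ Y ^ (2l) - 1` and
`2Y ≤ 1 + Y²` have certificates in the squares of `1 - Y` and `Y ^ (i + 2) - Y ^ i`. The same
algebra, applied to `s²` instead of `Y²`, shows that for `2 ≤ s` their total noise is at most `3`,
whence `2l Y ≤ Y ^ (2l) + 2l + 2`. Here `Y ^ (2l) = k B ^ (2l) ≤ k π_* ^ (-1/2) ρ ^ (2l)`, because
passing from `ℓ²` to `ℓ¹` norms of rows costs `√|V| ≤ π_* ^ (-1/2)`. Dividing by `2ls` gives the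
bound. For `s ≤ 2` it is weaker than `B ≤ 1`.
-/

section WeightedGraph

variable {V : Type*} [Fintype V] [DecidableEq V] [Nonempty V]

/-- The (weighted) degree `deg(u) = ∑_v A_{uv}` of a weighted graph `A`. -/
noncomputable def gdeg (A : Matrix V V ℝ) (u : V) : ℝ := ∑ v, A u v

/-- The total weight `m = ∑_u deg(u)`. -/
noncomputable def gm (A : Matrix V V ℝ) : ℝ := ∑ u, gdeg A u

/-- The stationary distribution `π(u) = deg(u)/m` of the random walk on `A`. -/
noncomputable def gpi (A : Matrix V V ℝ) (u : V) : ℝ := gdeg A u / gm A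

/-- `π_* = min_u π(u)`. -/
noncomputable def gpiStar (A : Matrix V V ℝ) : ℝ :=
  Finset.univ.inf' Finset.univ_nonempty (gpi A)

/-- The random-walk transition matrix `K = D⁻¹A`, i.e. `K_{uv} = A_{uv}/deg(u)`. -/
noncomputable def gK (A : Matrix V V ℝ) : Matrix V V ℝ :=
  Matrix.of fun u v => A u v / gdeg A u

/-- The `ℓ² → ℓ²` operator norm (spectral norm) of a real square matrix. -/
noncomputable def l2opNorm (M : Matrix V V ℝ) : ℝ :=
  ‖Matrix.toEuclideanCLM (𝕜 := ℝ) M‖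

/-- A symmetric matrix `M` is an `R`-local sum of PSD matrices if it is a finite sum
`M = ∑ i, M_i` of positive semidefinite matrices, each supported on a set `S_i` of at
most `R` rows/columns.  This is exactly derivability of `xᵀMx ≥ 0` in the `R`-local,
degree-2 static sum-of-squares proof system. -/
def IsLocalPSDSum (R : ℕ) (M : Matrix V V ℝ) : Prop :=
  ∃ (n : ℕ) (Ms : Fin n → Matrix V V ℝ) (Ss : Fin n → Finset V),
    M = ∑ i, Ms i ∧ (∀ i, (Ms i).PosSemidef) ∧ (∀ i, (Ss i).card ≤ R) ∧
    (∀ i u v, Ms i u v ≠ 0 → u ∈ Ss i ∧ v ∈ Ss i)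

end WeightedGraph

section LocalCone

variable {V : Type*} {R : ℕ}

/-- The convex cone of `R`-local sums of PSD matrices. -/
def localPSDCone (V : Type*) (R : ℕ) : PointedCone ℝ (Matrix V V ℝ) where
  carrier := {M | IsLocalPSDSum R M}
  zero_mem' := ⟨0, fun _ => 0, fun _ => ∅, by simp, by simp, by simp, by simp⟩
  add_mem' := by
    rintro _ _ ⟨m, Ms, Ss, rfl, hpsd, hcard, hsupp⟩ ⟨n, Ns, Ts, rfl, hpsd', hcard', hsupp'⟩
    exact ⟨m + n, Fin.append Ms Ns, Fin.append Ss Ts, by simp [Fin.sum_univ_add],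
      by simp [Fin.forall_fin_add, hpsd, hpsd'], by simp [Fin.forall_fin_add, hcard, hcard'],
      by simpa [Fin.forall_fin_add] using ⟨hsupp, hsupp'⟩⟩
  smul_mem' := by
    rintro c _ ⟨n, Ms, Ss, rfl, hpsd, hcard, hsupp⟩
    exact ⟨n, fun i => c • Ms i, Ss, Finset.smul_sum, fun i => (hpsd i).smul c.2, hcard,
      fun i u v h => hsupp i u v (right_ne_zero_of_mul h)⟩

lemma vecMulVec_self_mem_localPSDCone [Finite V] {x : V → ℝ} {S : Finset V}
    (hS : S.card ≤ R) (hx : ∀ v ∉ S, x v = 0) :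
    Matrix.vecMulVec x x ∈ localPSDCone V R := by
  refine ⟨1, fun _ => Matrix.vecMulVec x x, fun _ => S, by simp,
    fun _ => by simpa using Matrix.posSemidef_vecMulVec_self_star x, fun _ => hS,
    fun _ u v h => ⟨?_, ?_⟩⟩
  · exact not_imp_comm.1 (hx u) (left_ne_zero_of_mul h)
  · exact not_imp_comm.1 (hx v) (right_ne_zero_of_mul h)

variable [DecidableEq V]

lemma vecMulVec_single_single (u v : V) (a b : ℝ) :
    Matrix.vecMulVec (Pi.single u a) (Pi.single v b) = Matrix.single u v (a * b) := by
  ext i j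
  simp only [Matrix.vecMulVec_apply, Pi.single_apply, ite_zero_mul_ite_zero, Matrix.single_apply,
    eq_comm]

lemma diagonal_mem_localPSDCone [Finite V] (hR : 1 ≤ R) {w : V → ℝ} (hw : ∀ v, 0 ≤ w v) :
    Matrix.diagonal w ∈ localPSDCone V R := by
  have := Fintype.ofFinite V
  rw [← Matrix.sum_single_eq_diagonal]
  refine sum_mem fun v _ => ?_
  have hv : Matrix.vecMulVec (Pi.single v 1) (Pi.single v 1) ∈ localPSDCone V R :=
    vecMulVec_self_mem_localPSDCone (S := {v}) (by simpa using hR)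
      fun u hu => Pi.single_eq_of_ne (by simpa using hu) 1
  simpa [vecMulVec_single_single] using PointedCone.smul_mem _ (hw v) hv

lemma single_add_single_sub_mem_localPSDCone [Finite V] (hR : 2 ≤ R) (u v : V) (a : ℝ) :
    Matrix.single u u |a| + Matrix.single v v |a| - Matrix.single u v a - Matrix.single v u a
      ∈ localPSDCone V R := by
  have hsq : Matrix.vecMulVec (Pi.single u 1 - Pi.single v (SignType.sign a : ℝ))
      (Pi.single u 1 - Pi.single v (SignType.sign a : ℝ)) ∈ localPSDCone V R := by
    refine vecMulVec_self_mem_localPSDCone (S := {u, v}) (Finset.card_le_two.trans hR) ?_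
    intro x hx
    rw [Finset.mem_insert, Finset.mem_singleton, not_or] at hx
    simp [hx.1, hx.2]
  convert PointedCone.smul_mem _ (abs_nonneg a) hsq using 1
  have hsign : |a| * ((SignType.sign a : ℝ) * (SignType.sign a : ℝ)) = |a| := by
    rw [← mul_assoc, abs_mul_sign, self_mul_sign]
  simp only [Matrix.sub_vecMulVec, Matrix.vecMulVec_sub, vecMulVec_single_single, one_mul,
    mul_one, smul_sub, Matrix.smul_single, smul_eq_mul, abs_mul_sign, hsign]
  abel

variable [Fintype V]

lemma diagonal_sub_mem_localPSDCone (hR : 2 ≤ R) {M : Matrix V V ℝ} (hM : M.IsSymm) {w : V → ℝ}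
    (hw : ∀ u, ∑ v, |M u v| ≤ w u) : Matrix.diagonal w - M ∈ localPSDCone V R := by
  let r : V → ℝ := fun u => ∑ v, |M u v|
  have hedges : ∑ u, ∑ v, (Matrix.single u u |M u v| + Matrix.single v v |M u v|
      - Matrix.single u v (M u v) - Matrix.single v u (M u v))
      = (2 : ℝ) • (Matrix.diagonal r - M) := by
    have hout : ∑ u, ∑ v, Matrix.single u u |M u v| = Matrix.diagonal r := by
      rw [← Matrix.sum_single_eq_diagonal]
      refine Finset.sum_congr rfl fun u _ => ?_
      exact (map_sum (Matrix.singleAddMonoidHom u u) (fun v => |M u v|) Finset.univ).symm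
    have hin : ∑ u, ∑ v, Matrix.single v v |M u v| = Matrix.diagonal r := by
      rw [Finset.sum_comm, ← hout]
      simp only [hM.apply]
    have hfwd : ∑ u, ∑ v, Matrix.single u v (M u v) = M := (Matrix.matrix_eq_sum_single M).symm
    have hback : ∑ u, ∑ v, Matrix.single v u (M u v) = M := by
      rw [Finset.sum_comm]
      simpa only [hM.apply] using hfwd
    simp only [Finset.sum_add_distrib, Finset.sum_sub_distrib, hout, hin, hfwd, hback]
    module
  have hslack : Matrix.diagonal w - Matrix.diagonal r ∈ localPSDCone V R := by
    rw [Matrix.diagonal_sub]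
    exact diagonal_mem_localPSDCone (by omega) fun u => sub_nonneg.2 (hw u)
  have hmem := hedges ▸ sum_mem fun u _ => sum_mem fun v _ =>
    single_add_single_sub_mem_localPSDCone hR u v (M u v)
  convert add_mem hslack (PointedCone.smul_mem _ (by norm_num : (0 : ℝ) ≤ 1 / 2) hmem) using 1
  module

/-- The covariance matrix of the random vector `f v • e_v`, where `v` is sampled from the weights
`P` and `e_v` is the standard basis. -/
def pointCov (P f : V → ℝ) : Matrix V V ℝ :=
  Matrix.diagonal (P * f ^ 2) - Matrix.vecMulVec (P * f) (P * f)

lemma sum_smul_vecMulVec_add_single (P f x : V → ℝ) (hP : ∑ v, P v = 1) :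
    ∑ v, P v • Matrix.vecMulVec (x + Pi.single v (f v)) (x + Pi.single v (f v))
      = Matrix.vecMulVec (x + P * f) (x + P * f) + pointCov P f := by
  have hmean : ∑ v, P v • Pi.single v (f v) = P * f := by
    ext u
    simp [Pi.single_apply]
  have hsecond : ∑ v, P v • Matrix.vecMulVec (Pi.single v (f v)) (Pi.single v (f v))
      = Matrix.diagonal (P * f ^ 2) := by
    simp [vecMulVec_single_single, ← Matrix.sum_single_eq_diagonal, sq]
  have hleft : ∑ v, P v • Matrix.vecMulVec (Pi.single v (f v)) x = Matrix.vecMulVec (P * f) x := by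
    simpa [map_sum] using congrArg (fun y => vecMulVecBilin ℝ ℝ y x) hmean
  have hright : ∑ v, P v • Matrix.vecMulVec x (Pi.single v (f v)) = Matrix.vecMulVec x (P * f) := by
    simpa [map_sum] using congrArg (fun y => vecMulVecBilin ℝ ℝ x y) hmean
  simp only [Matrix.add_vecMulVec, Matrix.vecMulVec_add, smul_add, Finset.sum_add_distrib, hleft,
    hright, hsecond, ← Finset.sum_smul, hP, one_smul, pointCov]
  abel

-- Samples are drawn one at a time, so the translate `x` collects those already drawn.
lemma vecMulVec_add_pointCov_mem_localPSDCone {P f : V → ℝ} (hP0 : ∀ v, 0 ≤ P v)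
    (hP1 : ∑ v, P v = 1) (k : ℕ) {x : V → ℝ} {S : Finset V} (hx : ∀ v ∉ S, x v = 0)
    (hS : S.card + k ≤ R) :
    Matrix.vecMulVec (x + (k : ℝ) • (P * f)) (x + (k : ℝ) • (P * f)) + (k : ℝ) • pointCov P f
      ∈ localPSDCone V R := by
  induction k generalizing x S with
  | zero => simpa using vecMulVec_self_mem_localPSDCone hS hx
  | succ k ih =>
    have hdraw : ∀ v, Matrix.vecMulVec (x + (k : ℝ) • (P * f) + Pi.single v (f v))
        (x + (k : ℝ) • (P * f) + Pi.single v (f v)) + (k : ℝ) • pointCov P f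
          ∈ localPSDCone V R := by
      intro v
      rw [add_right_comm]
      refine ih (S := insert v S) (fun u hu => ?_) ?_
      · rw [Finset.mem_insert, not_or] at hu
        simp [hx u hu.2, hu.1]
      · have := Finset.card_insert_le v S
        omega
    convert sum_mem fun v (_ : v ∈ Finset.univ) => PointedCone.smul_mem _ (hP0 v) (hdraw v) using 1
    simp only [smul_add (P _), Finset.sum_add_distrib, ← Finset.sum_smul, hP1, one_smul,
      sum_smul_vecMulVec_add_single P f _ hP1, Nat.cast_succ, add_smul, ← add_assoc]
    abel

/-- Maurey's empirical method: `g` is approximated by the average of `k` independent signed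
vertices, so that `g gᵀ` becomes `k`-local up to the sampling variance. -/
lemma vecMulVec_add_diagonal_abs_mem_localPSDCone {k : ℕ} (hk : 2 ≤ k) (hkR : k ≤ R)
    (g : V → ℝ) :
    Matrix.vecMulVec g g + ((∑ v, |g v|) / (k - 1)) • Matrix.diagonal |g| ∈ localPSDCone V R := by
  set c := ∑ v, |g v|
  rcases (Finset.sum_nonneg fun v _ => abs_nonneg (g v) : 0 ≤ c).eq_or_lt with hc0 | hc0
  · have hg : g = 0 := by
      ext v
      simpa using (Finset.sum_eq_zero_iff_of_nonneg fun v _ => abs_nonneg (g v)).1 hc0.symm v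
        (Finset.mem_univ v)
    simp [hg]
  let P : V → ℝ := fun v => |g v| / c
  let f : V → ℝ := fun v => c * SignType.sign (g v)
  have hmean : P * f = g := by
    ext v
    simp only [P, f, Pi.mul_apply]
    rw [div_mul_eq_mul_div, mul_left_comm, abs_mul_sign, mul_div_cancel_left₀ _ hc0.ne']
  have hsecond : P * f ^ 2 = c • |g| := by
    rw [sq, ← mul_assoc, hmean]
    ext v
    simp only [f, Pi.mul_apply, Pi.smul_apply, Pi.abs_apply, smul_eq_mul]
    rw [mul_left_comm, self_mul_sign]
  have hk0 : (0 : ℝ) < k := by positivity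
  have hk1 : (0 : ℝ) < k - 1 := sub_pos.2 (by exact_mod_cast hk)
  have hsample := vecMulVec_add_pointCov_mem_localPSDCone (R := R) (P := P) (f := f) (x := 0)
    (S := ∅) (fun v => by positivity) (by rw [← Finset.sum_div, div_self hc0.ne']) k (by simp)
    (by simpa using hkR)
  convert PointedCone.smul_mem _ (inv_nonneg.2 (mul_pos hk0 hk1).le) hsample using 1
  simp only [pointCov, hmean, hsecond, zero_add, Matrix.smul_vecMulVec, Matrix.vecMulVec_smul,
    Matrix.diagonal_smul]
  match_scalars <;> field_simp
  ring

end LocalCone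

section WeightedForms

open scoped Matrix Matrix.Norms.Operator

variable {V : Type*} [Fintype V] {Q : Matrix V V ℝ} {c : ℝ}

lemma linfty_opNorm_le_iff (hc : 0 ≤ c) : ‖Q‖ ≤ c ↔ ∀ u, ∑ v, |Q u v| ≤ c := by
  lift c to NNReal using hc
  rw [Matrix.linfty_opNorm_def, NNReal.coe_le_coe, Finset.sup_le_iff]
  simp [← NNReal.coe_le_coe]

variable [DecidableEq V] {p : V → ℝ} {k R : ℕ}

lemma mem_selfAdjointMatricesSubmodule_diagonal :
    Q ∈ selfAdjointMatricesSubmodule (Matrix.diagonal p) ↔ ∀ u v, p u * Q u v = p v * Q v u := by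
  rw [mem_selfAdjointMatricesSubmodule, Matrix.IsSelfAdjoint, Matrix.IsAdjointPair,
    ← Matrix.ext_iff, forall_comm]
  simp only [Matrix.mul_diagonal, Matrix.diagonal_mul, Matrix.transpose_apply, mul_comm (Q _ _)]

lemma pow_mem_selfAdjointMatricesSubmodule {J : Matrix V V ℝ}
    (hQ : Q ∈ selfAdjointMatricesSubmodule J) (n : ℕ) :
    Q ^ n ∈ selfAdjointMatricesSubmodule J := by
  rw [mem_selfAdjointMatricesSubmodule] at hQ ⊢
  have hsemi : SemiconjBy J Q Qᵀ := hQ.symm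
  rw [Matrix.IsSelfAdjoint, Matrix.IsAdjointPair, Matrix.transpose_pow]
  exact (hsemi.pow_right n).symm

/-- The operators `Q` whose form `⟨x, Q x⟩_p`, taken with respect to the weights `p`, is an
`R`-local sum of PSD forms. -/
def formCone (p : V → ℝ) (R : ℕ) : PointedCone ℝ (Matrix V V ℝ) :=
  (localPSDCone V R).comap (LinearMap.mulLeft ℝ (Matrix.diagonal p))

lemma mem_formCone : Q ∈ formCone p R ↔ Matrix.diagonal p * Q ∈ localPSDCone V R := Iff.rfl

lemma one_mem_formCone (hp : ∀ v, 0 ≤ p v) (hR : 1 ≤ R) : 1 ∈ formCone p R := by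
  rw [mem_formCone, mul_one]
  exact diagonal_mem_localPSDCone hR hp

lemma smul_one_sub_mem_formCone (hp : ∀ v, 0 ≤ p v) (hR : 2 ≤ R)
    (hQ : Q ∈ selfAdjointMatricesSubmodule (Matrix.diagonal p)) (hc : ‖Q‖ ≤ c) :
    c • 1 - Q ∈ formCone p R := by
  have hrow := (linfty_opNorm_le_iff ((norm_nonneg Q).trans hc)).1 hc
  have hsymm : (Matrix.diagonal p * Q).IsSymm := by
    ext u v
    simpa using mem_selfAdjointMatricesSubmodule_diagonal.1 hQ v u
  rw [mem_formCone, mul_sub, mul_smul_comm, mul_one, ← Matrix.diagonal_smul]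
  refine diagonal_sub_mem_localPSDCone hR hsymm fun u => ?_
  calc ∑ v, |(Matrix.diagonal p * Q) u v| = p u * ∑ v, |Q u v| := by
        simp [Matrix.diagonal_mul, abs_mul, abs_of_nonneg (hp u), Finset.mul_sum]
    _ ≤ p u * c := mul_le_mul_of_nonneg_left (hrow u) (hp u)
    _ = (c • p) u := mul_comm _ _

lemma diagonal_mul_sq (hQ : Q ∈ selfAdjointMatricesSubmodule (Matrix.diagonal p)) :
    Matrix.diagonal p * Q ^ 2 = ∑ u, p u • Matrix.vecMulVec (Q u) (Q u) := by
  ext a b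
  rw [Matrix.diagonal_mul, sq, Matrix.mul_apply, Finset.mul_sum, Matrix.sum_apply]
  refine Finset.sum_congr rfl fun u _ => ?_
  rw [← mul_assoc, mem_selfAdjointMatricesSubmodule_diagonal.1 hQ a u, Matrix.smul_apply,
    Matrix.vecMulVec_apply, smul_eq_mul, mul_assoc]

/-- Reversibility turns the sum over the sampled rows into a sum along the row of `v`. -/
lemma sum_weighted_row_mul_abs_le (hp : ∀ v, 0 ≤ p v)
    (hQ : Q ∈ selfAdjointMatricesSubmodule (Matrix.diagonal p)) (hc : ‖Q‖ ≤ c) (v : V) :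
    ∑ u, p u * ((∑ w, |Q u w|) * |Q u v|) ≤ c ^ 2 * p v := by
  have hc0 : 0 ≤ c := (norm_nonneg Q).trans hc
  have hrow := (linfty_opNorm_le_iff hc0).1 hc
  have hrev : ∀ u, p u * |Q u v| = p v * |Q v u| := fun u => by
    rw [← abs_of_nonneg (hp u), ← abs_of_nonneg (hp v), ← abs_mul, ← abs_mul,
      mem_selfAdjointMatricesSubmodule_diagonal.1 hQ]
  calc ∑ u, p u * ((∑ w, |Q u w|) * |Q u v|)
      = ∑ u, (∑ w, |Q u w|) * (p v * |Q v u|) := by simp only [← hrev, mul_left_comm]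
    _ ≤ ∑ u, c * (p v * |Q v u|) := by
        have := hp v
        gcongr with u
        exact hrow u
    _ = c * p v * ∑ u, |Q v u| := by simp only [Finset.mul_sum, mul_assoc]
    _ ≤ c * p v * c := mul_le_mul_of_nonneg_left (hrow v) (mul_nonneg hc0 (hp v))
    _ = c ^ 2 * p v := by ring

lemma sq_add_smul_one_mem_formCone (hp : ∀ v, 0 ≤ p v) (hk : 2 ≤ k) (hkR : k ≤ R)
    (hQ : Q ∈ selfAdjointMatricesSubmodule (Matrix.diagonal p)) (hc : ‖Q‖ ≤ c) :
    Q ^ 2 + (c ^ 2 / (k - 1)) • 1 ∈ formCone p R := by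
  have hk1 : (0 : ℝ) < k - 1 := sub_pos.2 (by exact_mod_cast hk)
  let noise : V → ℝ := fun v => (∑ u, p u * ((∑ w, |Q u w|) * |Q u v|)) / (k - 1)
  have hnoise : ∑ u, p u • (((∑ w, |Q u w|) / (k - 1)) • Matrix.diagonal |Q u|)
      = Matrix.diagonal noise := by
    ext a b
    rcases eq_or_ne a b with rfl | hab
    · simp only [noise, Matrix.sum_apply, Matrix.smul_apply, Matrix.diagonal_apply_eq, smul_eq_mul,
        Pi.abs_apply, div_mul_eq_mul_div, mul_div_assoc', ← Finset.sum_div]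
    · simp [Matrix.sum_apply, hab]
  have hrows := sum_mem fun u (_ : u ∈ Finset.univ) => PointedCone.smul_mem _ (hp u)
    (vecMulVec_add_diagonal_abs_mem_localPSDCone hk hkR (Q u))
  simp only [smul_add, Finset.sum_add_distrib, hnoise, ← diagonal_mul_sq hQ] at hrows
  have hslack : Matrix.diagonal ((c ^ 2 / (k - 1)) • p - noise) ∈ localPSDCone V R := by
    refine diagonal_mem_localPSDCone (by omega) fun v => sub_nonneg.2 ?_
    rw [Pi.smul_apply, smul_eq_mul, div_mul_eq_mul_div]
    exact div_le_div_of_nonneg_right (sum_weighted_row_mul_abs_le hp hQ hc v) hk1.le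
  have hsplit : (c ^ 2 / (k - 1)) • Matrix.diagonal p
      = Matrix.diagonal noise + Matrix.diagonal ((c ^ 2 / (k - 1)) • p - noise) := by
    rw [← Matrix.diagonal_smul, Matrix.diagonal_add]
    exact congrArg Matrix.diagonal (add_sub_cancel noise _).symm
  rw [mem_formCone, mul_add, mul_smul_comm, mul_one, hsplit, ← add_assoc]
  exact add_mem hrows hslack

end WeightedForms

section ChainOfSquares

lemma sub_one_sq_mul_sum_geom_sum {S : Type*} [Ring S] (x : S) (n : ℕ) :
    (x - 1) ^ 2 * ∑ j ∈ Finset.range n, ∑ i ∈ Finset.range j, x ^ i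
      = x ^ n - 1 - n • (x - 1) := by
  have hinner : ∀ j, (x - 1) * ∑ i ∈ Finset.range j, x ^ i = x ^ j - 1 := mul_geom_sum x
  rw [sq, mul_assoc, Finset.mul_sum, Finset.sum_congr rfl fun j _ => hinner j,
    Finset.sum_sub_distrib, mul_sub, hinner, Finset.sum_const, Finset.card_range, mul_smul_comm,
    mul_one]

/-- A sum-of-squares certificate of Bernoulli's inequality `l (y² - 1) ≤ y ^ (2 * l) - 1`, combined
with `2 y ≤ 1 + y²`. -/
lemma nsmul_one_sub_sq_add_sum_sq {S : Type*} [Ring S] (y : S) (l : ℕ) :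
    l • (1 - y) ^ 2 + ∑ j ∈ Finset.range l, ∑ i ∈ Finset.range j, (y ^ i * (y ^ 2 - 1)) ^ 2
      = y ^ (2 * l) - 1 + (2 * l) • (1 - y) := by
  have hsq : ∀ i, (y ^ i * (y ^ 2 - 1)) ^ 2 = (y ^ 2 - 1) ^ 2 * (y ^ 2) ^ i := fun i => by
    have hcomm : Commute (y ^ i) (y ^ 2 - 1) :=
      ((Commute.refl y).pow_pow i 2).sub_right (Commute.one_right _)
    rw [hcomm.mul_pow, (hcomm.pow_pow 2 2).eq, pow_right_comm]
  have hfirst : (1 - y) ^ 2 = (y ^ 2 - 1) + 2 • (1 - y) := by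
    noncomm_ring
  simp only [hsq, ← Finset.mul_sum, sub_one_sq_mul_sum_geom_sum]
  rw [hfirst, smul_add, smul_smul, ← pow_mul, mul_comm l]
  abel

lemma chain_noise_le {s : ℝ} (hs : 2 ≤ s) (l : ℕ) :
    l * (1 + s) ^ 2 + ∑ j ∈ Finset.range l, ∑ i ∈ Finset.range j, (s ^ i * (s ^ 2 + 1)) ^ 2
      ≤ 3 * (s ^ (2 * l) - 1) := by
  have hfirst : (1 + s) ^ 2 ≤ 3 * (s ^ 2 - 1) := by nlinarith
  have hdiff : (s ^ 2 + 1) ^ 2 ≤ 3 * (s ^ 2 - 1) ^ 2 := by nlinarith [sq_nonneg (s ^ 2 - 4)]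
  have hsq : ∀ i, (s ^ i * (s ^ 2 + 1)) ^ 2 = (s ^ 2 + 1) ^ 2 * (s ^ 2) ^ i := fun i => by ring
  simp only [hsq, ← Finset.mul_sum]
  calc l * (1 + s) ^ 2 + (s ^ 2 + 1) ^ 2 * ∑ j ∈ Finset.range l, ∑ i ∈ Finset.range j, (s ^ 2) ^ i
      ≤ l * (3 * (s ^ 2 - 1))
          + 3 * (s ^ 2 - 1) ^ 2 * ∑ j ∈ Finset.range l, ∑ i ∈ Finset.range j, (s ^ 2) ^ i := by
        gcongr
    _ = 3 * (s ^ (2 * l) - 1) := by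
        rw [mul_assoc 3 (_ ^ 2), sub_one_sq_mul_sum_geom_sum, pow_mul, nsmul_eq_mul]
        ring

open scoped Matrix.Norms.Operator

variable {V : Type*} [Fintype V] [DecidableEq V] [Nonempty V] {p : V → ℝ} {k l R : ℕ}

lemma pow_add_sub_mem_formCone (hp : ∀ v, 0 ≤ p v) (hl : 1 ≤ l) (hkR : k ≤ R) {s : ℝ}
    (hs : 2 ≤ s) (hsk : s ^ (2 * l) = k) {Y : Matrix V V ℝ}
    (hY : Y ∈ selfAdjointMatricesSubmodule (Matrix.diagonal p)) (hYs : ‖Y‖ ≤ s) :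
    Y ^ (2 * l) + 2 • 1 + (2 * l) • (1 - Y) ∈ formCone p R := by
  have hpow := pow_mem_selfAdjointMatricesSubmodule hY
  have hk : 2 ≤ k := by
    have : (2 : ℝ) ≤ k := hsk ▸ hs.trans (le_self_pow₀ (by linarith) (by omega))
    exact_mod_cast this
  have hk1 : (0 : ℝ) < k - 1 := sub_pos.2 (by exact_mod_cast hk)
  have hfirst : (1 - Y) ^ 2 + ((1 + s) ^ 2 / (k - 1)) • 1 ∈ formCone p R := by
    refine sq_add_smul_one_mem_formCone hp hk hkR (by simpa using sub_mem (hpow 0) hY) ?_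
    calc ‖1 - Y‖ ≤ ‖(1 : Matrix V V ℝ)‖ + ‖Y‖ := norm_sub_le _ _
      _ ≤ 1 + s := by rw [norm_one]; gcongr
  have hdiff : ∀ i, (Y ^ i * (Y ^ 2 - 1)) ^ 2 + ((s ^ i * (s ^ 2 + 1)) ^ 2 / (k - 1)) • 1
      ∈ formCone p R := fun i => by
    refine sq_add_smul_one_mem_formCone hp hk hkR ?_ ?_
    · simpa [mul_sub, pow_add] using sub_mem (hpow (i + 2)) (hpow i)
    calc ‖Y ^ i * (Y ^ 2 - 1)‖ ≤ ‖Y‖ ^ i * (‖Y‖ ^ 2 + 1) := by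
          grw [norm_mul_le, norm_sub_le, norm_pow_le, norm_pow_le, norm_one]
      _ ≤ s ^ i * (s ^ 2 + 1) := by gcongr
  have hslack : (3 - (l * (1 + s) ^ 2 + ∑ j ∈ Finset.range l, ∑ i ∈ Finset.range j,
      (s ^ i * (s ^ 2 + 1)) ^ 2) / (k - 1)) • 1 ∈ formCone p R := by
    refine PointedCone.smul_mem _ (sub_nonneg.2 ?_) (one_mem_formCone hp (by omega))
    rw [div_le_iff₀ hk1, ← hsk]
    exact chain_noise_le hs l
  have hsquares := add_mem (nsmul_mem hfirst l) (sum_mem fun j (_ : j ∈ Finset.range l) =>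
    sum_mem fun i (_ : i ∈ Finset.range j) => hdiff i)
  convert add_mem hsquares hslack using 1
  simp only [Finset.sum_add_distrib, ← Finset.sum_smul, ← Finset.sum_div]
  linear_combination (norm := module) -nsmul_one_sub_sq_add_sum_sq Y l

theorem smul_one_sub_mem_formCone_of_norm_pow_le (hp : ∀ v, 0 ≤ p v) (hl : 1 ≤ l) (hR : 2 ≤ R)
    (hkR : k ≤ R) {s b : ℝ} (hs : 0 < s) (hsk : s ^ (2 * l) = k) {B : Matrix V V ℝ}
    (hB : B ∈ selfAdjointMatricesSubmodule (Matrix.diagonal p)) (hB1 : ‖B‖ ≤ 1)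
    (hb : ‖B ^ (2 * l)‖ ≤ b) :
    (k * b / (2 * s) + 2 / s) • 1 - B ∈ formCone p R := by
  have hb0 : 0 ≤ b := (norm_nonneg _).trans hb
  rcases le_total s 2 with hs2 | hs2
  · refine smul_one_sub_mem_formCone hp hR hB (hB1.trans ?_)
    calc (1 : ℝ) ≤ 2 / s := (one_le_div hs).2 hs2
      _ ≤ k * b / (2 * s) + 2 / s := le_add_of_nonneg_left (by positivity)
  have hchain : (s • B) ^ (2 * l) + 2 • 1 + (2 * l) • (1 - s • B) ∈ formCone p R := by
    refine pow_add_sub_mem_formCone hp hl hkR hs2 hsk (Submodule.smul_mem _ s hB) ?_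
    rw [norm_smul, Real.norm_of_nonneg hs.le]
    exact mul_le_of_le_one_right hs.le hB1
  have hpow : (k : ℝ) • (b • 1 - B ^ (2 * l)) ∈ formCone p R :=
    PointedCone.smul_mem _ k.cast_nonneg
      (smul_one_sub_mem_formCone hp hR (pow_mem_selfAdjointMatricesSubmodule hB _) hb)
  have hslack : ((l - 1) * (k * b + 2) : ℝ) • 1 ∈ formCone p R :=
    PointedCone.smul_mem _ (mul_nonneg (sub_nonneg.2 (by exact_mod_cast hl)) (by positivity))
      (one_mem_formCone hp (by omega))
  have hl0 : (l : ℝ) ≠ 0 := by exact_mod_cast (by omega : l ≠ 0)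
  convert PointedCone.smul_mem _ (by positivity : 0 ≤ (2 * l * s)⁻¹)
    (add_mem (add_mem hchain hpow) hslack) using 1
  rw [smul_pow, hsk]
  match_scalars <;> field_simp [hl0] <;> ring

end ChainOfSquares

section OperatorNorm

open scoped Matrix Matrix.Norms.Operator

variable {V : Type*} [Fintype V]

lemma norm_toLp_two_le (x : V → ℝ) : ‖WithLp.toLp 2 x‖ ≤ √(Fintype.card V) * ‖x‖ := by
  simpa [Real.sqrt_eq_rpow] using
    (PiLp.lipschitzWith_toLp 2 fun _ : V => ℝ).norm_le_mul (WithLp.toLp_zero 2) x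

lemma linfty_opNorm_le_sqrt_card_mul_l2opNorm [DecidableEq V] (M : Matrix V V ℝ) :
    ‖M‖ ≤ √(Fintype.card V) * l2opNorm M := by
  rw [Matrix.linfty_opNorm_eq_opNorm]
  refine ContinuousLinearMap.opNorm_le_bound _
    (mul_nonneg (Real.sqrt_nonneg _) (norm_nonneg _)) fun x => ?_
  calc ‖M *ᵥ x‖ ≤ ‖Matrix.toEuclideanCLM (𝕜 := ℝ) M (WithLp.toLp 2 x)‖ := by
        simpa using (PiLp.lipschitzWith_ofLp 2 fun _ : V => ℝ).norm_le_mul (WithLp.ofLp_zero 2)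
          (WithLp.toLp 2 (M *ᵥ x))
    _ ≤ l2opNorm M * ‖WithLp.toLp 2 x‖ := ContinuousLinearMap.le_opNorm _ _
    _ ≤ l2opNorm M * (√(Fintype.card V) * ‖x‖) :=
        mul_le_mul_of_nonneg_left (norm_toLp_two_le x) (norm_nonneg _)
    _ = √(Fintype.card V) * l2opNorm M * ‖x‖ := by ring

end OperatorNorm

section SignedWalk

open scoped Matrix.Norms.Operator

variable {V : Type*} [Fintype V] {A Ξ : Matrix V V ℝ}

lemma gpi_mul_gK (hrow : ∀ u, 0 < ∑ v, A u v) (u v : V) :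
    gpi A u * gK A u v = (gm A)⁻¹ * A u v := by
  have hdeg : gdeg A u ≠ 0 := (hrow u).ne'
  rw [gpi, gK, Matrix.of_apply]
  field_simp

lemma diagonal_gpi_mul_hadamard_gK [DecidableEq V] (hrow : ∀ u, 0 < ∑ v, A u v)
    (Ξ : Matrix V V ℝ) :
    Matrix.diagonal (gpi A) * Matrix.hadamard Ξ (gK A) = (gm A)⁻¹ • Matrix.hadamard Ξ A := by
  ext u v
  rw [Matrix.diagonal_mul, Matrix.hadamard_apply, mul_left_comm, gpi_mul_gK hrow, mul_left_comm]
  rfl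

lemma hadamard_gK_mem_selfAdjointMatricesSubmodule [DecidableEq V] (hA : A.IsSymm)
    (hrow : ∀ u, 0 < ∑ v, A u v) (hΞsym : Ξ.IsSymm) :
    Matrix.hadamard Ξ (gK A) ∈ selfAdjointMatricesSubmodule (Matrix.diagonal (gpi A)) := by
  rw [mem_selfAdjointMatricesSubmodule_diagonal]
  intro u v
  rw [Matrix.hadamard_apply, Matrix.hadamard_apply, mul_left_comm, mul_left_comm (gpi A v),
    gpi_mul_gK hrow, gpi_mul_gK hrow, hA.apply, hΞsym.apply]

lemma linfty_opNorm_hadamard_gK_le_one (hA0 : ∀ u v, 0 ≤ A u v) (hrow : ∀ u, 0 < ∑ v, A u v)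
    (hΞ : ∀ u v, |Ξ u v| ≤ 1) : ‖Matrix.hadamard Ξ (gK A)‖ ≤ 1 := by
  have hK0 : ∀ u v, 0 ≤ gK A u v := fun u v => div_nonneg (hA0 u v) (hrow u).le
  rw [linfty_opNorm_le_iff zero_le_one]
  intro u
  calc ∑ v, |Ξ u v * gK A u v| ≤ ∑ v, gK A u v := by
        refine Finset.sum_le_sum fun v _ => ?_
        rw [abs_mul, abs_of_nonneg (hK0 u v)]
        exact mul_le_of_le_one_left (hK0 u v) (hΞ u v)
    _ = 1 := by
        simp only [gK, Matrix.of_apply, ← Finset.sum_div]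
        exact div_self (hrow u).ne'

variable [Nonempty V]

lemma gm_pos (hrow : ∀ u, 0 < ∑ v, A u v) : 0 < gm A :=
  Finset.sum_pos (fun u _ => hrow u) Finset.univ_nonempty

lemma gpi_pos (hrow : ∀ u, 0 < ∑ v, A u v) (u : V) : 0 < gpi A u :=
  div_pos (hrow u) (gm_pos hrow)

lemma sqrt_card_le_inv_sqrt_gpiStar (hrow : ∀ u, 0 < ∑ v, A u v) :
    √(Fintype.card V) ≤ (√(gpiStar A))⁻¹ := by
  have hpos : 0 < gpiStar A := (Finset.lt_inf'_iff _).2 fun u _ => gpi_pos hrow u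
  have hcard : Fintype.card V * gpiStar A ≤ 1 := by
    calc Fintype.card V * gpiStar A = ∑ _u : V, gpiStar A := by simp
      _ ≤ ∑ u, gpi A u := Finset.sum_le_sum fun u hu => Finset.inf'_le _ hu
      _ = 1 := by
        simp only [gpi, ← Finset.sum_div]
        exact div_self (gm_pos hrow).ne'
  rw [← Real.sqrt_inv]
  exact Real.sqrt_le_sqrt ((le_inv_mul_iff₀' hpos).2 hcard |>.trans_eq (mul_one _))

theorem sa_2xor_spectral_general [DecidableEq V] (hA : A.IsSymm) (hA0 : ∀ u v, 0 ≤ A u v)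
    (hrow : ∀ u, 0 < ∑ v, A u v) (hΞsym : Ξ.IsSymm) (hΞ : ∀ u v, |Ξ u v| ≤ 1)
    {l k R : ℕ} (hl : 1 ≤ l) (hk : 1 ≤ k) (hR : 2 ≤ R) (hkR : k ≤ R) {ρ : ℝ}
    (hop : l2opNorm ((Matrix.hadamard Ξ (gK A)) ^ (2 * l)) ≤ ρ ^ (2 * l)) :
    letI β : ℝ := ((k : ℝ) * (Real.sqrt (gpiStar A))⁻¹
        / (2 * (k : ℝ) ^ ((1 : ℝ) / (2 * (l : ℝ))))) * ρ ^ (2 * l)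
      + 2 / (k : ℝ) ^ ((1 : ℝ) / (2 * (l : ℝ)))
    IsLocalPSDSum R (β • Matrix.diagonal (gpi A) - (gm A)⁻¹ • Matrix.hadamard Ξ A) ∧
    IsLocalPSDSum R (β • Matrix.diagonal (gpi A) + (gm A)⁻¹ • Matrix.hadamard Ξ A) := by
  set B := Matrix.hadamard Ξ (gK A)
  have hp : ∀ u, 0 ≤ gpi A u := fun u => (gpi_pos hrow u).le
  have hBsa : B ∈ selfAdjointMatricesSubmodule (Matrix.diagonal (gpi A)) :=
    hadamard_gK_mem_selfAdjointMatricesSubmodule hA hrow hΞsym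
  have hB1 : ‖B‖ ≤ 1 := linfty_opNorm_hadamard_gK_le_one hA0 hrow hΞ
  have hBpow : ‖B ^ (2 * l)‖ ≤ (√(gpiStar A))⁻¹ * ρ ^ (2 * l) :=
    (linfty_opNorm_le_sqrt_card_mul_l2opNorm _).trans
      (mul_le_mul (sqrt_card_le_inv_sqrt_gpiStar hrow) hop (norm_nonneg _) (by positivity))
  have hBneg : ‖(-B) ^ (2 * l)‖ ≤ (√(gpiStar A))⁻¹ * ρ ^ (2 * l) := by
    rwa [(even_two_mul l).neg_pow]
  have hs : 0 < (k : ℝ) ^ ((1 : ℝ) / (2 * (l : ℝ))) := by positivity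
  have hsk : ((k : ℝ) ^ ((1 : ℝ) / (2 * (l : ℝ)))) ^ (2 * l) = k := by
    simpa using Real.rpow_inv_natCast_pow k.cast_nonneg (by omega : 2 * l ≠ 0)
  have hsub := smul_one_sub_mem_formCone_of_norm_pow_le hp hl hR hkR hs hsk hBsa hB1 hBpow
  have hadd := smul_one_sub_mem_formCone_of_norm_pow_le hp hl hR hkR hs hsk (neg_mem hBsa)
    ((norm_neg B).trans_le hB1) hBneg
  rw [mem_formCone, mul_sub, mul_smul_comm, mul_one, ← mul_assoc, mul_div_right_comm] at hsub hadd
  rw [mul_neg, sub_neg_eq_add] at hadd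
  rw [← diagonal_gpi_mul_hadamard_gK hrow]
  exact ⟨hsub, hadd⟩

end SignedWalk

theorem sa_2xor_spectral {V : Type*} [Fintype V] [DecidableEq V] [Nonempty V]
    (A : Matrix V V ℝ) (hA : A.IsSymm) (hA0 : ∀ u v, 0 ≤ A u v)
    (hrow : ∀ u, 0 < ∑ v, A u v)
    (Ξ : Matrix V V ℝ) (hΞsym : Ξ.IsSymm) (hΞ : ∀ u v, Ξ u v = 1 ∨ Ξ u v = -1)
    (l k : ℕ) (hl : 1 ≤ l) (hk : 3 ^ l ≤ k)
    (ρ : ℝ) (hρ : 0 ≤ ρ)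
    (hop : l2opNorm ((Matrix.hadamard Ξ (gK A)) ^ (2 * l)) ≤ ρ ^ (2 * l)) :
    letI β : ℝ := ((k : ℝ) * (Real.sqrt (gpiStar A))⁻¹
        / (2 * (k : ℝ) ^ ((1 : ℝ) / (2 * (l : ℝ))))) * ρ ^ (2 * l)
      + 2 / (k : ℝ) ^ ((1 : ℝ) / (2 * (l : ℝ)))
    IsLocalPSDSum (k * l + 1)
      (β • Matrix.diagonal (gpi A) - (gm A)⁻¹ • Matrix.hadamard Ξ A) ∧
    IsLocalPSDSum (k * l + 1)
      (β • Matrix.diagonal (gpi A) + (gm A)⁻¹ • Matrix.hadamard Ξ A) := by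
  have hk1 : 1 ≤ k := (Nat.one_le_pow l 3 (by norm_num)).trans hk
  exact sa_2xor_spectral_general hA hA0 hrow hΞsym
    (fun u v => by rcases hΞ u v with h | h <;> simp [h]) hl hk1
    (Nat.succ_le_succ (Nat.mul_pos hk1 hl)) (Nat.le_succ_of_le (Nat.le_mul_of_pos_right k hl)) hop
end
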